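/- arXiv:1510.05843 — 2 statements merged into one kernel-verified Lean document; each statement's English description precedes it below -/
import Mathlib

section
/- Let X be a compact metric space with Lebesgue covering dimension dim(X) = d and let T : X → X be an injective continuous map with dim(P_m) < m/2 for every m ≤ 2d. Let n ≥ 1, let H_n = P_n ∖ P_{n−1} be the set of points of period exactly n, and set t_y = min(n−1, 2d). Let Ū_y ⊂ H_n be a compact set with Ū_y ∩ T^l Ū_y = ∅ for l = 1, …, t_y, and let Ū_x ⊂ X ∖ P_n be a compact set such that the sets Ū_x, TŪ_x, …, T^{2d}Ū_x, Ū_y, TŪ_y, …, T^{t_y}Ū_y are pairwise disjoint. Then D_{Ū_x × Ū_y} = {h ∈ C(X,[0,1]) : h_0^{2d}(x') ≠ h_0^{2d}(y') for all x' ∈ Ū_x, y' ∈ Ū_y} is dense in C(X,[0,1]) with the supremum metric. -/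
open Function Set Topology unitInterval

/-- A topological space `X` has Lebesgue covering dimension at most `m`:
every finite open cover admits a finite open refinement in which no point
belongs to more than `m + 1` sets. -/
def CovDimLE (X : Type*) [TopologicalSpace X] (m : ℕ) : Prop :=
  ∀ (n : ℕ) (U : Fin n → Set X), (∀ i, IsOpen (U i)) → (⋃ i, U i) = univ →
    ∃ (k : ℕ) (V : Fin k → Set X), (∀ j, IsOpen (V j)) ∧ (⋃ j, V j) = univ ∧
      (∀ j, ∃ i, V j ⊆ U i) ∧ ∀ x : X, Nat.card {j : Fin k // x ∈ V j} ≤ m + 1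

/-- The Lebesgue covering dimension of a topological space, as an element of `ℕ∞`
(`⊤` if no finite bound exists). -/
noncomputable def covDim (X : Type*) [TopologicalSpace X] : ℕ∞ :=
  sInf {e : ℕ∞ | ∃ m : ℕ, e = m ∧ CovDimLE X m}

/-- The set of periodic points of `T` of period at most `n`. -/
def periodicLE {X : Type*} (T : X → X) (n : ℕ) : Set X :=
  {x | ∃ p, 1 ≤ p ∧ p ≤ n ∧ T^[p] x = x}

/-- The `(2d+1)`-delay observation map associated to an observable `h : C(X, [0,1])`
and the dynamics `T : X → X`: `x ↦ (h x, h (T x), …, h (T^{2d} x))`. -/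
def delayMap {X : Type*} [TopologicalSpace X] (T : X → X) (d : ℕ)
    (h : C(X, I)) : X → (Fin (2 * d + 1) → I) :=
  fun x i => h (T^[(i : ℕ)] x)

/-- A space whose covering dimension is the natural number `d` satisfies `CovDimLE X d`. -/
lemma covDimLE_of_covDim_eq {X : Type*} [TopologicalSpace X] {d : ℕ} (h : covDim X = d) :
    CovDimLE X d := by
  have hne : {e : ℕ∞ | ∃ m : ℕ, e = m ∧ CovDimLE X m}.Nonempty := by
    by_contra hempty
    rw [Set.not_nonempty_iff_eq_empty] at hempty
    rw [covDim, hempty, sInf_empty] at h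
    exact ENat.natCast_ne_top d h.symm
  obtain ⟨m, hm, hX⟩ := csInf_mem hne
  have hmd : m = d := by
    rw [covDim, hm] at h
    exact_mod_cast h
  exact hmd ▸ hX

/-- The affine span of at most `finrank ℝ E` points is a proper subspace. -/
lemma affineSpan_image_finset_ne_top {E κ : Type*} [NormedAddCommGroup E] [NormedSpace ℝ E]
    [FiniteDimensional ℝ E] (w : κ → E) (s : Finset κ) (hs : s.card ≤ Module.finrank ℝ E) :
    affineSpan ℝ (w '' s) ≠ ⊤ := by
  classical
  intro htop
  rcases s.eq_empty_or_nonempty with rfl | hne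
  · simp at htop
  · obtain ⟨m, hm⟩ := Nat.exists_eq_succ_of_ne_zero hne.card_pos.ne'
    have hle := finrank_vectorSpan_image_finset_le ℝ w s hm
    rw [Finset.coe_image, ← direction_affineSpan, htop, AffineSubspace.direction_top,
      finrank_top] at hle
    omega

/-- Given finitely many points `v i` in a space of dimension greater than `2 * d`, one can choose
points `u i` in prescribed nonempty open sets such that no affine combination of `d + 1` points
among the `u i` is an affine combination of `d + 1` points among the `v i`. -/
lemma exists_forall_sum_smul_ne {E ι : Type*} [NormedAddCommGroup E] [NormedSpace ℝ E]
    [FiniteDimensional ℝ E] [Finite ι] {d : ℕ} (hE : 2 * d < Module.finrank ℝ E)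
    (v : ι → E) (S : ι → Set E) (hSo : ∀ i, IsOpen (S i)) (hSne : ∀ i, (S i).Nonempty) :
    ∃ u : ι → E, (∀ i, u i ∈ S i) ∧ ∀ A B : Finset ι, A.card ≤ d + 1 → B.card ≤ d + 1 →
      ∀ α β : ι → ℝ, ∑ i ∈ A, α i = 1 → ∑ i ∈ B, β i = 1 →
        ∑ i ∈ A, α i • u i ≠ ∑ i ∈ B, β i • v i := by
  classical
  have := Fintype.ofFinite ι
  suffices H : ∀ s : Finset ι, ∃ u : ι → E, (∀ i, u i ∈ S i) ∧
      ∀ A B : Finset ι, A ⊆ s → A.card ≤ d + 1 → B.card ≤ d + 1 →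
        ∀ α β : ι → ℝ, ∑ i ∈ A, α i = 1 → ∑ i ∈ B, β i = 1 →
          ∑ i ∈ A, α i • u i ≠ ∑ i ∈ B, β i • v i by
    obtain ⟨u, hu, h⟩ := H Finset.univ
    exact ⟨u, hu, fun A B => h A B A.subset_univ⟩
  intro s
  induction s using Finset.induction_on with
  | empty =>
    choose u hu using hSne
    refine ⟨u, hu, fun A B hA _ _ α β hα => ?_⟩
    rw [Finset.subset_empty.mp hA] at hα
    simp at hα
  | insert j s hj ih =>
    obtain ⟨u, hu, h⟩ := ih
    let F : Finset (Finset (ι ⊕ ι)) :=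
      Finset.univ.filter fun D => D.card ≤ Module.finrank ℝ E
    let bad : Set E := ⋃ D ∈ F, (affineSpan ℝ (Sum.elim u v '' D) : Set E)
    obtain ⟨z, hzS, hz⟩ : ∃ z ∈ S j, z ∉ bad := by
      let : MeasurableSpace E := borel E
      have : BorelSpace E := ⟨rfl⟩
      have hbad : (MeasureTheory.Measure.addHaar : MeasureTheory.Measure E) bad = 0 := by
        refine (MeasureTheory.measure_biUnion_null_iff F.countable_toSet).mpr fun D hD => ?_
        refine MeasureTheory.Measure.addHaar_affineSubspace _ _ ?_
        exact affineSpan_image_finset_ne_top _ _ (Finset.mem_filter.mp hD).2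
      by_contra! hcon
      exact ((hSo j).measure_pos MeasureTheory.Measure.addHaar (hSne j)).ne'
        (MeasureTheory.measure_mono_null hcon hbad)
    refine ⟨Function.update u j z, fun i => ?_, fun A B hA hAd hBd α β hα hβ heq => ?_⟩
    · rcases eq_or_ne i j with rfl | hij
      · simpa using hzS
      · simpa [hij] using hu i
    have herase : ∑ i ∈ A.erase j, α i • Function.update u j z i = ∑ i ∈ A.erase j, α i • u i :=
      Finset.sum_congr rfl fun i hi => by
        rw [Function.update_of_ne (Finset.ne_of_mem_erase hi)]
    have hAs : A.erase j ⊆ s := Finset.subset_insert_iff.mp hA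
    by_cases hjA : j ∈ A ∧ α j ≠ 0
    · obtain ⟨hjA, hαj⟩ := hjA
      rw [← Finset.add_sum_erase A _ hjA] at heq hα
      rw [herase, Function.update_self] at heq
      apply hz
      have hcard : ((A.erase j).disjSum B).card ≤ Module.finrank ℝ E := by
        rw [Finset.card_disjSum, Finset.card_erase_of_mem hjA]
        omega
      refine Set.mem_iUnion₂.mpr ⟨(A.erase j).disjSum B, Finset.mem_filter.mpr ⟨Finset.mem_univ _, hcard⟩, ?_⟩
      let c : ι ⊕ ι → ℝ := Sum.elim (fun i => -((α j)⁻¹ * α i)) (fun i => (α j)⁻¹ * β i)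
      have hc : ∑ i ∈ (A.erase j).disjSum B, c i = 1 := by
        rw [Finset.sum_disjSum]
        simp only [c, Sum.elim_inl, Sum.elim_inr, Finset.sum_neg_distrib, ← Finset.mul_sum, hβ]
        field_simp
        linarith
      have hzc : ((A.erase j).disjSum B).affineCombination ℝ (Sum.elim u v) c = z := by
        rw [Finset.affineCombination_eq_linear_combination _ _ _ hc, Finset.sum_disjSum]
        simp only [c, Sum.elim_inl, Sum.elim_inr, neg_smul, mul_smul, Finset.sum_neg_distrib,
          ← Finset.smul_sum]
        rw [← heq, smul_add, inv_smul_smul₀ hαj]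
        abel
      rw [← hzc]
      exact affineCombination_mem_affineSpan_image hc (fun i hi hi' => absurd hi hi') _
    · have hzero : ∀ i ∈ A, i ∉ A.erase j → α i = 0 := by grind
      have hα' : ∑ i ∈ A.erase j, α i = 1 := by
        rw [← hα]
        exact Finset.sum_subset (Finset.erase_subset j A) hzero
      refine h (A.erase j) B hAs ((Finset.card_erase_le).trans hAd) hBd α β hα' hβ ?_
      rw [← herase, ← heq]
      exact Finset.sum_subset (Finset.erase_subset j A) fun i hi hi' => by
        rw [hzero i hi hi', zero_smul]

/-- A Tietze-type extension: a function on a compact space embedded in `X` which is `ε`-close to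
`h₀` extends to an `I`-valued function on `X` which is `ε`-close to `h₀`. -/
lemma exists_extension_dist_le {X Z : Type*} [TopologicalSpace X] [CompactSpace X] [T2Space X]
    [TopologicalSpace Z] [CompactSpace Z] {e : Z → X} (he : Continuous e) (hinj : Injective e)
    (h₀ : C(X, I)) {g : Z → ℝ} (hg : Continuous g) (hgI : ∀ z, g z ∈ I) {ε : ℝ} (hε : 0 ≤ ε)
    (hclose : ∀ z, |g z - h₀ (e z)| ≤ ε) :
    ∃ h : C(X, I), (∀ z, (h (e z) : ℝ) = g z) ∧ dist h h₀ ≤ ε := by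
  let δ : BoundedContinuousFunction Z ℝ :=
    BoundedContinuousFunction.mkOfCompact ⟨fun z => g z - h₀ (e z), by fun_prop⟩
  obtain ⟨Δ, hΔnorm, hΔ⟩ :=
    δ.exists_extension_norm_eq_of_isClosedEmbedding (he.isClosedEmbedding hinj)
  have hδ : ‖δ‖ ≤ ε := (BoundedContinuousFunction.norm_le hε).mpr hclose
  refine ⟨⟨fun x => projIcc 0 1 zero_le_one (h₀ x + Δ x), by fun_prop⟩, fun z => ?_, ?_⟩
  · have hz : (h₀ (e z) : ℝ) + Δ (e z) = g z := by
      have := congrFun hΔ z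
      simp only [comp_apply, δ, BoundedContinuousFunction.mkOfCompact_apply,
        ContinuousMap.coe_mk] at this
      rw [this]
      ring
    simp only [ContinuousMap.coe_mk]
    rw [hz, projIcc_of_mem _ (hgI z)]
  · refine (ContinuousMap.dist_le hε).mpr fun x => ?_
    have hproj : projIcc (0 : ℝ) 1 zero_le_one (h₀ x) = h₀ x := projIcc_val _ _
    calc dist (projIcc (0 : ℝ) 1 zero_le_one (h₀ x + Δ x)) (h₀ x)
        = |(projIcc (0 : ℝ) 1 zero_le_one (h₀ x + Δ x) : ℝ)
            - projIcc (0 : ℝ) 1 zero_le_one (h₀ x)| := by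
          rw [hproj, Subtype.dist_eq, Real.dist_eq]
      _ ≤ |(h₀ x + Δ x) - h₀ x| := abs_projIcc_sub_projIcc _
      _ = ‖Δ x‖ := by rw [add_sub_cancel_left, Real.norm_eq_abs]
      _ ≤ ε := (Δ.norm_coe_le_norm x).trans (hΔnorm.le.trans hδ)

/-- On a compact space of covering dimension at most `d`, every continuous map to a metric space
admits a finite partition of unity of multiplicity at most `d + 1` such that the map is nearly
constant on the support of each function. -/
lemma CovDimLE.exists_partition {X M : Type*} [TopologicalSpace X] [CompactSpace X] [T2Space X]
    [PseudoMetricSpace M] {d : ℕ} (hX : CovDimLE X d) {H : X → M} (hH : Continuous H)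
    {ε : ℝ} (hε : 0 < ε) :
    ∃ (k : ℕ) (p : Fin k → X) (ψ : Fin k → C(X, ℝ)), (∀ j x, 0 ≤ ψ j x) ∧
      (∀ x, ∑ j, ψ j x = 1) ∧ (∀ j x, ψ j x ≠ 0 → dist (H (p j)) (H x) < ε) ∧
      ∀ x, (Finset.univ.filter fun j => ψ j x ≠ 0).card ≤ d + 1 := by
  obtain ⟨t, ht⟩ := isCompact_univ.elim_finite_subcover (fun p => {x | dist (H p) (H x) < ε})
    (fun p => isOpen_lt (by fun_prop) continuous_const)
    (fun x _ => mem_iUnion.mpr ⟨x, by simpa using hε⟩)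
  obtain ⟨k, V, hVo, hVu, hVsub, hVcard⟩ := hX t.card
    (fun i => {x | dist (H (t.equivFin.symm i)) (H x) < ε})
    (fun i => isOpen_lt (by fun_prop) continuous_const) (by
      refine eq_univ_of_forall fun x => ?_
      obtain ⟨p, hp, hx⟩ := mem_iUnion₂.mp (ht (mem_univ x))
      exact mem_iUnion.mpr ⟨t.equivFin ⟨p, hp⟩, by simpa using hx⟩)
  choose c hc using hVsub
  obtain ⟨f, hf⟩ := PartitionOfUnity.exists_isSubordinate_of_locallyFinite isClosed_univ V hVo
    (locallyFinite_of_finite V) hVu.ge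
  have hmem : ∀ j x, f j x ≠ 0 → x ∈ V j := fun j x hx => hf j (subset_tsupport _ hx)
  refine ⟨k, fun j => t.equivFin.symm (c j), fun j => f j, fun j x => f.nonneg j x, fun x => ?_,
    fun j x hx => hc j (hmem j x hx), fun x => le_trans ?_ (hVcard x)⟩
  · rw [← finsum_eq_sum_of_fintype]
    exact f.sum_eq_one (mem_univ x)
  · classical
    rw [Nat.card_eq_fintype_card, Fintype.card_subtype]
    exact Finset.card_le_card fun j hj => by
      simp only [Finset.mem_filter, Finset.mem_univ, true_and] at hj ⊢
      exact hmem j x hj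

/-- A convex combination of points lies in a convex set as soon as the points with nonzero weight
do. -/
lemma Convex.sum_mem_of_ne_zero {E ι : Type*} [AddCommGroup E] [Module ℝ E] [Fintype ι]
    {s : Set E} (hs : Convex ℝ s) {a : ι → ℝ} {w : ι → E} (h0 : ∀ i, 0 ≤ a i)
    (h1 : ∑ i, a i = 1) (hw : ∀ i, a i ≠ 0 → w i ∈ s) : ∑ i, a i • w i ∈ s := by
  classical
  rw [← Finset.sum_filter_ne_zero] at h1
  rw [← Finset.sum_filter_of_ne (p := fun i => a i ≠ 0) fun i _ h => (smul_ne_zero_iff.mp h).1]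
  exact hs.sum_mem (fun i _ => h0 i) h1 fun i hi => hw i (Finset.mem_filter.mp hi).2

theorem stmt4 {X : Type*} [MetricSpace X] [CompactSpace X]
    (T : X → X) (hTc : Continuous T) (hTi : Function.Injective T)
    (d : ℕ) (hdim : covDim X = d)
    (hper : ∀ m : ℕ, 1 ≤ m → m ≤ 2 * d →
      2 * covDim (periodicLE T m) < (m : ℕ∞))
    (n : ℕ) (hn : 1 ≤ n)
    -- `Ū_y` is a compact subset of `H_n = P_n ∖ P_{n-1}`
    (Uy : Set X) (hUyc : IsCompact Uy)
    (hUyH : Uy ⊆ periodicLE T n \ periodicLE T (n - 1))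
    -- `Ū_y ∩ T^l Ū_y = ∅` for `l = 1, …, t_y` where `t_y = min (n-1) (2d)`
    (hUyd : ∀ l : ℕ, 1 ≤ l → l ≤ min (n - 1) (2 * d) → Uy ∩ T^[l] '' Uy = ∅)
    -- `Ū_x` is a compact subset of `X ∖ P_n`
    (Ux : Set X) (hUxc : IsCompact Ux) (hUxP : Ux ⊆ (periodicLE T n)ᶜ)
    -- `Ū_x, TŪ_x, …, T^{2d}Ū_x, Ū_y, TŪ_y, …, T^{t_y}Ū_y` are pairwise disjoint
    (hdisj : Pairwise (Disjoint on
      (Sum.elim (fun k : Fin (2 * d + 1) => T^[(k : ℕ)] '' Ux)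
                (fun k : Fin (min (n - 1) (2 * d) + 1) => T^[(k : ℕ)] '' Uy)))) :
    Dense {h : C(X, I) |
      ∀ x' ∈ Ux, ∀ y' ∈ Uy, delayMap T d h x' ≠ delayMap T d h y'} := by
  classical
  refine Metric.dense_iff.mpr fun h₀ ε hε => ?_
  have hTk : ∀ k : ℕ, Continuous T^[k] := fun k => hTc.iterate k
  let H : X → Fin (2 * d + 1) → ℝ := fun x k => h₀ (T^[k] x)
  have hH : Continuous H := continuous_pi fun k => by
    have := hTk k
    fun_prop
  have hHI : ∀ x, H x ∈ Icc (0 : Fin (2 * d + 1) → ℝ) 1 :=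
    fun x => ⟨fun k => (h₀ (T^[k] x)).2.1, fun k => (h₀ (T^[k] x)).2.2⟩
  obtain ⟨N, p, ψ, hψ0, hψ1, hψd, hψc⟩ :=
    (covDimLE_of_covDim_eq hdim).exists_partition hH (by positivity : 0 < ε / 4)
  have hn0 : 0 < n := hn
  let t := min (n - 1) (2 * d)
  have hmod : ∀ k : Fin (2 * d + 1), (k : ℕ) % n < t + 1 := fun k => by
    have h1 := Nat.mod_lt (k : ℕ) hn0
    have h2 := Nat.mod_le (k : ℕ) n
    have h3 := k.isLt
    simp only [t]
    omega
  have ht : t + 1 ≤ 2 * d + 1 := by simp [t]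
  let v : Fin N → Fin (2 * d + 1) → ℝ :=
    fun j k => H (p j) (Fin.castLE ht ⟨(k : ℕ) % n, hmod k⟩)
  let S : Fin N → Set (Fin (2 * d + 1) → ℝ) :=
    fun j => Metric.ball (H (p j)) (ε / 4) ∩ univ.pi fun _ => Ioo 0 1
  have hSne : ∀ j, (S j).Nonempty := fun j => by
    have hcl : H (p j) ∈ closure (univ.pi fun _ : Fin (2 * d + 1) => Ioo (0 : ℝ) 1) := by
      rw [closure_pi_set]
      intro k _
      rw [closure_Ioo zero_ne_one]
      exact (h₀ (T^[k] (p j))).2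
    exact mem_closure_iff.mp hcl _ Metric.isOpen_ball (Metric.mem_ball_self (by positivity))
  obtain ⟨u, huS, hu⟩ := exists_forall_sum_smul_ne (d := d) (by simp) v S
    (fun j => Metric.isOpen_ball.inter (isOpen_set_pi finite_univ fun _ _ => isOpen_Ioo)) hSne
  have huI : ∀ j, u j ∈ Icc (0 : Fin (2 * d + 1) → ℝ) 1 := fun j =>
    ⟨fun k => ((huS j).2 k trivial).1.le, fun k => ((huS j).2 k trivial).2.le⟩
  -- weighted averages of points close to the `H (p j)` stay in the cube and close to `H`
  have havg : ∀ w : Fin N → Fin (2 * d + 1) → ℝ, (∀ j, w j ∈ Icc 0 1) →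
      (∀ j, dist (w j) (H (p j)) < ε / 4) → ∀ x k,
        ∑ j, ψ j x * w j k ∈ I ∧ |∑ j, ψ j x * w j k - h₀ (T^[(k : ℕ)] x)| ≤ ε / 2 := by
    intro w hwI hwd x k
    have hk : ∑ j, ψ j x * w j k = (∑ j, ψ j x • w j) k := by simp
    have hI := (convex_Icc (0 : Fin (2 * d + 1) → ℝ) 1).sum_mem_of_ne_zero (hψ0 · x) (hψ1 x)
      fun j _ => hwI j
    have hB := (convex_closedBall (H x) (ε / 2)).sum_mem_of_ne_zero (hψ0 · x) (hψ1 x)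
      (w := w) fun j hj => by
        have h1 := hwd j
        have h2 := hψd j x hj
        have h3 := dist_triangle (w j) (H (p j)) (H x)
        rw [Metric.mem_closedBall]
        linarith
    rw [hk]
    exact ⟨⟨hI.1 k, hI.2 k⟩, (dist_le_pi_dist _ (H x) k).trans hB⟩
  have := isCompact_iff_compactSpace.mp hUxc
  have := isCompact_iff_compactSpace.mp hUyc
  let e : (Fin (2 * d + 1) × Ux) ⊕ (Fin (t + 1) × Uy) → X :=
    Sum.elim (fun z => T^[(z.1 : ℕ)] z.2) (fun z => T^[(z.1 : ℕ)] z.2)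
  have he : Continuous e := by
    refine Continuous.sumElim ?_ ?_ <;>
    exact continuous_prod_of_discrete_left.mpr fun k => (hTk k).comp continuous_subtype_val
  have hinj : Injective e := by
    rintro (⟨k, x⟩ | ⟨k, x⟩) (⟨l, y⟩ | ⟨l, y⟩) hxy <;>
      simp only [e, Sum.elim_inl, Sum.elim_inr] at hxy
    · obtain rfl : k = l := by
        by_contra hkl
        exact (hdisj (i := .inl k) (j := .inl l) (by simpa using hkl)).ne_of_mem
          (mem_image_of_mem _ x.2) (mem_image_of_mem _ y.2) hxy
      rw [Subtype.ext (hTi.iterate k hxy)]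
    · exact ((hdisj (i := .inl k) (j := .inr l) (by simp)).ne_of_mem
          (mem_image_of_mem _ x.2) (mem_image_of_mem _ y.2) hxy).elim
    · exact ((hdisj (i := .inr k) (j := .inl l) (by simp)).ne_of_mem
          (mem_image_of_mem _ x.2) (mem_image_of_mem _ y.2) hxy).elim
    · obtain rfl : k = l := by
        by_contra hkl
        exact (hdisj (i := .inr k) (j := .inr l) (by simpa using hkl)).ne_of_mem
          (mem_image_of_mem _ x.2) (mem_image_of_mem _ y.2) hxy
      rw [Subtype.ext (hTi.iterate k hxy)]
  let g : (Fin (2 * d + 1) × Ux) ⊕ (Fin (t + 1) × Uy) → ℝ :=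
    Sum.elim (fun z => ∑ j, ψ j z.2 * u j z.1)
      (fun z => ∑ j, ψ j z.2 * H (p j) (Fin.castLE ht z.1))
  have hg : Continuous g := by
    refine Continuous.sumElim ?_ ?_ <;>
    exact continuous_prod_of_discrete_left.mpr fun k => by fun_prop
  have hgz : ∀ z, g z ∈ I ∧ |g z - h₀ (e z)| ≤ ε / 2 := by
    rintro (⟨k, x⟩ | ⟨k, y⟩)
    · exact havg u huI (fun j => (huS j).1) x k
    · exact havg (fun j => H (p j)) (fun j => hHI _)
        (fun j => by rw [dist_self]; positivity) y (Fin.castLE ht k)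
  obtain ⟨h, hhe, hh⟩ := exists_extension_dist_le he hinj h₀ hg (fun z => (hgz z).1)
    (by positivity) (fun z => (hgz z).2)
  refine ⟨h, Metric.mem_ball.mpr (by linarith), fun x hx y hy heq => ?_⟩
  have hyn : IsPeriodicPt T n y := by
    obtain ⟨⟨q, hq1, hqn, hq⟩, hy'⟩ := hUyH hy
    obtain rfl : q = n := by
      by_contra hne
      exact hy' ⟨q, hq1, by omega, hq⟩
    exact hq
  have hsum : ∑ j, ψ j x • u j = ∑ j, ψ j y • v j := by
    ext k
    have hx' := hhe (.inl (k, ⟨x, hx⟩))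
    have hy' := hhe (.inr (⟨(k : ℕ) % n, hmod k⟩, ⟨y, hy⟩))
    have hk : h (T^[(k : ℕ)] x) = h (T^[(k : ℕ)] y) := congrFun heq k
    simp only [e, g, Sum.elim_inl, Sum.elim_inr] at hx' hy'
    rw [hyn.iterate_mod_apply] at hy'
    simp only [Finset.sum_apply, Pi.smul_apply, smul_eq_mul, v]
    rw [← hx', ← hy', hk]
  have hfilter : ∀ (z : X) (w : Fin N → Fin (2 * d + 1) → ℝ),
      ∑ j with ψ j z ≠ 0, ψ j z • w j = ∑ j, ψ j z • w j := fun z w =>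
    Finset.sum_filter_of_ne fun j _ hj => (smul_ne_zero_iff.mp hj).1
  have hone : ∀ z : X, ∑ j with ψ j z ≠ 0, ψ j z = 1 := fun z => by
    rw [Finset.sum_filter_ne_zero, hψ1]
  refine hu _ _ (hψc x) (hψc y) (ψ · x) (ψ · y) (hone x) (hone y) ?_
  rw [hfilter x u, hfilter y v, hsum]
end

section
/- Let X be a compact metric space with Lebesgue covering dimension dim(X) = d < ∞ and let T : X → X be a homeomorphism such that dim(P_n) < n/2 for all n ≤ 2d, where P_n is the set of periodic points of period at most n. Then the dynamical system (X,T) embeds equivariantly into the cubical shift ([0,1]^ℤ, σ), i.e. there is a topological embedding φ : X → [0,1]^ℤ with φ ∘ T = σ ∘ φ, where σ is the shift map σ((x_i)_{i∈ℤ}) = (x_{i+1})_{i∈ℤ}. -/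
open Function Set Topology unitInterval

open Module

/-- Solving a linear system for the vector `v j₀`, one sees that the solution sets of a family of
systems of `finrank V` equations with fewer than `finrank V` parameters are small. -/
theorem dimH_setOf_exists_sum_eq_lt {Q V J : Type*} [NormedAddCommGroup Q] [NormedSpace ℝ Q]
    [FiniteDimensional ℝ Q] [NormedAddCommGroup V] [NormedSpace ℝ V] [FiniteDimensional ℝ V]
    [Fintype J] (j₀ : J) (c : J → Q → V →L[ℝ] V) (z : Q → V) (C : Set Q)
    (hC : Convex ℝ C) (hc : ∀ j, ContDiff ℝ 1 (c j)) (hz : ContDiff ℝ 1 z)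
    (hunit : ∀ q ∈ C, IsUnit (c j₀ q)) (hQ : finrank ℝ Q < finrank ℝ V) :
    dimH {v : J → V | ∃ q ∈ C, ∑ j, c j q (v j) = z q} < finrank ℝ (J → V) := by
  classical
  let Ψ : Q × ({j // j ≠ j₀} → V) → (J → V) := fun p j =>
    if h : j = j₀ then
      Ring.inverse (c j₀ p.1) (z p.1 - ∑ i : {j // j ≠ j₀}, c i p.1 (p.2 i))
    else p.2 ⟨j, h⟩
  have hΨ : ContDiffOn ℝ 1 Ψ (C ×ˢ univ) := by
    rw [contDiffOn_pi]
    intro j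
    by_cases h : j = j₀
    · simp only [Ψ, h, dite_true]
      refine ContDiffOn.clm_apply ?_ ?_
      · rintro p ⟨hp, -⟩
        obtain ⟨u, hu⟩ := hunit p.1 hp
        have h1 : ContDiffAt ℝ 1 Ring.inverse (c j₀ p.1) := hu ▸ contDiffAt_ringInverse ℝ u
        exact (h1.comp p ((hc j₀).comp contDiff_fst).contDiffAt).contDiffWithinAt
      · refine (ContDiff.sub (hz.comp contDiff_fst) (ContDiff.sum fun i _ => ?_)).contDiffOn
        exact ((hc i).comp contDiff_fst).clm_apply ((contDiff_apply ℝ V i).comp contDiff_snd)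
    · simp only [Ψ, h, dite_false]
      exact ((contDiff_apply ℝ V (⟨j, h⟩ : {j // j ≠ j₀})).comp contDiff_snd).contDiffOn
  have hsub : {v : J → V | ∃ q ∈ C, ∑ j, c j q (v j) = z q} ⊆ Ψ '' (C ×ˢ univ) := by
    rintro v ⟨q, hq, hv⟩
    refine ⟨(q, fun i => v i), ⟨hq, mem_univ _⟩, funext fun j => ?_⟩
    by_cases h : j = j₀
    · subst h
      have hsum : ∑ i, c i q (v i) = c j q (v j) + ∑ i : {i // i ≠ j}, c i q (v i) :=
        Fintype.sum_eq_add_sum_subtype_ne _ j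
      have : z q - ∑ i : {i // i ≠ j}, c i q (v i) = c j q (v j) := by
        rw [← hv, hsum, add_sub_cancel_right]
      simp only [Ψ, dite_true, this]
      rw [← mul_apply_eq_comp, Ring.inverse_mul_cancel _ (hunit q hq)]
      simp
    · simp [Ψ, h]
  have hcard : Fintype.card {j // j ≠ j₀} + 1 = Fintype.card J := by
    have := Fintype.card_pos_iff.2 ⟨j₀⟩
    simp only [ne_eq, Fintype.card_subtype_compl, Fintype.card_subtype_eq]
    omega
  calc dimH {v : J → V | ∃ q ∈ C, ∑ j, c j q (v j) = z q}
      ≤ dimH (Ψ '' (C ×ˢ univ)) := dimH_mono hsub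
    _ ≤ dimH (C ×ˢ (univ : Set ({j // j ≠ j₀} → V))) :=
        hΨ.dimH_image_le (hC.prod convex_univ) subset_rfl
    _ ≤ dimH (univ : Set (Q × ({j // j ≠ j₀} → V))) := dimH_mono (subset_univ _)
    _ = finrank ℝ (Q × ({j // j ≠ j₀} → V)) := Real.dimH_univ_eq_finrank _
    _ < finrank ℝ (J → V) := by
        rw [Nat.cast_lt, finrank_prod, finrank_pi_fintype, finrank_pi_fintype]
        simp only [Finset.sum_const, Finset.card_univ, smul_eq_mul, ← hcard]
        rw [add_mul, one_mul]
        omega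

/-- The barycentric coordinates with at most `D + 1` nonzero entries: the `D`-skeleton of the
standard simplex. -/
def simplexSkeleton (J : Type*) [Fintype J] (D : ℕ) : Set (J → ℝ) :=
  {a | (∀ j, 0 ≤ a j) ∧ ∑ j, a j = 1 ∧ ∃ s : Finset J, s.card ≤ D + 1 ∧ ∀ j ∉ s, a j = 0}

/-- The affine parametrization of the affine span of a face `s` of the standard simplex by its
coordinates away from the vertex `j`. -/
noncomputable def faceParam {J : Type*} [DecidableEq J] (s : Finset J) (j : J)
    (α : {i // i ∈ s.erase j} → ℝ) : J → ℝ := fun i =>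
  if i = j then 1 - ∑ k, α k else if h : i ∈ s.erase j then α ⟨i, h⟩ else 0

theorem contDiff_faceParam {J : Type*} [DecidableEq J] (s : Finset J) (j i : J) :
    ContDiff ℝ 1 fun α => faceParam s j α i := by
  unfold faceParam
  split_ifs <;> fun_prop

theorem faceParam_convexCombination {J : Type*} [DecidableEq J] (s : Finset J) (j i : J)
    (α β : {i // i ∈ s.erase j} → ℝ) {x y : ℝ} (hxy : x + y = 1) :
    faceParam s j (x • α + y • β) i = x * faceParam s j α i + y * faceParam s j β i := by
  unfold faceParam
  split_ifs
  · simp only [Pi.add_apply, Pi.smul_apply, smul_eq_mul, Finset.sum_add_distrib, ← Finset.mul_sum]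
    linear_combination -hxy
  · simp
  · simp

theorem convexCombination_lt {x y a b a' b' : ℝ} (hx : 0 ≤ x) (hy : 0 ≤ y) (hxy : x + y = 1)
    (ha : a < a') (hb : b < b') : x * a + y * b < x * a' + y * b' := by
  rcases hx.eq_or_lt with rfl | hx
  · obtain rfl : y = 1 := by linarith
    linarith
  · exact add_lt_add_of_lt_of_le (mul_lt_mul_of_pos_left ha hx)
      (mul_le_mul_of_nonneg_left hb.le hy)

theorem exists_faceParam_eq {J : Type*} [Fintype J] [DecidableEq J] {s : Finset J} {j : J}
    (hj : j ∈ s) {a : J → ℝ} (ha : ∑ i, a i = 1) (has : ∀ i ∉ s, a i = 0) :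
    ∃ α, faceParam s j α = a := by
  refine ⟨fun i => a i, funext fun i => ?_⟩
  unfold faceParam
  split_ifs with h1 h2
  · subst h1
    have h3 : ∑ k : {k // k ∈ s.erase i}, a k = ∑ k ∈ s.erase i, a k :=
      Finset.sum_coe_sort (s.erase i) a
    have h4 : ∑ k ∈ s, a k = 1 := by
      rw [← ha]
      exact Finset.sum_subset (Finset.subset_univ s) fun k _ hk => has k hk
    rw [h3, ← h4, ← Finset.add_sum_erase s a hj]
    ring
  · rfl
  · exact (has i fun hi => h2 (Finset.mem_erase.2 ⟨h1, hi⟩)).symm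

theorem finrank_faceParam_domain_le {J : Type*} [DecidableEq J] {s : Finset J} {j : J} {D : ℕ}
    (hj : j ∈ s) (hs : s.card ≤ D + 1) : finrank ℝ ({i // i ∈ s.erase j} → ℝ) ≤ D := by
  rw [finrank_pi, Fintype.card_coe, Finset.card_erase_of_mem hj]
  omega

theorem exists_mem_and_pos {J : Type*} [Fintype J] {s : Finset J} {a : J → ℝ}
    (ha : ∑ i, a i = 1) (has : ∀ i ∉ s, a i = 0) : ∃ j ∈ s, 0 < a j := by
  by_contra! h
  have : ∑ i, a i ≤ 0 := Finset.sum_nonpos fun i _ => by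
    by_cases hi : i ∈ s
    · exact h i hi
    · exact (has i hi).le
  linarith

theorem dimH_iUnion_lt_of_finite {ι Y : Type*} [Finite ι] [EMetricSpace Y] {s : ι → Set Y}
    {r : ENNReal} (hr : 0 < r) (h : ∀ i, dimH (s i) < r) : dimH (⋃ i, s i) < r := by
  rw [dimH_iUnion]
  cases nonempty_fintype ι
  rw [← Finset.sup_univ_eq_iSup, Finset.sup_lt_iff hr]
  exact fun i _ => h i

/-- The composition with a self-map of the index set, as a continuous linear map. -/
noncomputable def compCLM {E : Type*} [Fintype E] (τ : E → E) : (E → ℝ) →L[ℝ] (E → ℝ) :=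
  ContinuousLinearMap.pi fun e => ContinuousLinearMap.proj (τ e)

theorem isUnit_smul_one_sub_smul_compCLM {E : Type*} [Fintype E] (τ : E → E) {a b : ℝ}
    (hb : |b| < a) : IsUnit (a • 1 - b • compCLM τ) := by
  have ha : 0 < a := (abs_nonneg b).trans_lt hb
  have hτ : ‖compCLM τ‖ ≤ 1 := ContinuousLinearMap.opNorm_le_bound _ zero_le_one fun u => by
    rw [one_mul, pi_norm_le_iff_of_nonneg (norm_nonneg u)]
    exact fun e => norm_le_pi_norm u (τ e)
  have h1 : ‖(b / a) • compCLM τ‖ < 1 := by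
    rw [norm_smul, Real.norm_eq_abs, abs_div, abs_of_pos ha]
    have h2 : |b| / a < 1 := (div_lt_one ha).2 hb
    have h3 : 0 ≤ |b| / a := by positivity
    nlinarith [norm_nonneg (compCLM τ)]
  have h4 : a • 1 - b • compCLM τ = (Units.mk0 a ha.ne') • (1 - (b / a) • compCLM τ) := by
    rw [Units.smul_mk0, smul_sub, smul_smul, mul_div_cancel₀ _ ha.ne']
  rw [h4]
  exact (isUnit_one_sub_of_norm_lt_one h1).smul _

theorem finrank_vertices_pos {J E : Type*} [Fintype J] [Fintype E] (hJ : Nonempty J)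
    (hE : 0 < Fintype.card E) : (0 : ENNReal) < finrank ℝ (J → E → ℝ) := by
  rw [finrank_pi_fintype]
  simp only [finrank_fintype_fun_eq_card, Finset.sum_const, Finset.card_univ, smul_eq_mul]
  exact_mod_cast Nat.mul_pos (Fintype.card_pos_iff.2 hJ) hE

/-- For most `v`, the linear map of simplices with vertices `v` has, on distinct points of the
`D`-skeleton, values which do not differ by the permutation `τ` of the coordinates. -/
theorem dimH_setOf_exists_ne_comp_eq_lt {J E : Type*} [Fintype J] [Fintype E] {D : ℕ}
    (hJ : Nonempty J) (hD : 2 * D < Fintype.card E) (τ : E → E) :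
    dimH {v : J → E → ℝ | ∃ a ∈ simplexSkeleton J D, ∃ b ∈ simplexSkeleton J D, a ≠ b ∧
      ∀ e, ∑ j, a j * v j e = ∑ j, b j * v j (τ e)} < finrank ℝ (J → E → ℝ) := by
  classical
  have hpos := finrank_vertices_pos hJ (E := E) (by omega)
  let ι := {x : (Finset J × Finset J) × J × J //
    x.1.1.card ≤ D + 1 ∧ x.1.2.card ≤ D + 1 ∧ x.2.1 ∈ x.1.1 ∧ x.2.2 ∈ x.1.2}
  let c (x : ι) (i : J) (q : ({i // i ∈ x.1.1.1.erase x.1.2.1} → ℝ) ×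
      ({i // i ∈ x.1.1.2.erase x.1.2.2} → ℝ)) : (E → ℝ) →L[ℝ] (E → ℝ) :=
    faceParam x.1.1.1 x.1.2.1 q.1 i • 1 - faceParam x.1.1.2 x.1.2.2 q.2 i • compCLM τ
  let C (x : ι) : Set (({i // i ∈ x.1.1.1.erase x.1.2.1} → ℝ) ×
      ({i // i ∈ x.1.1.2.erase x.1.2.2} → ℝ)) :=
    {q | |faceParam x.1.1.2 x.1.2.2 q.2 x.1.2.1| < faceParam x.1.1.1 x.1.2.1 q.1 x.1.2.1}
  refine (dimH_mono ?_).trans_lt (dimH_iUnion_lt_of_finite (ι := ι)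
    (s := fun x => {v | ∃ q ∈ C x, ∑ j, c x j q (v j) = 0}) hpos fun x => ?_)
  · rintro v ⟨a, ⟨ha0, ha1, s, hs, has⟩, b, ⟨hb0, hb1, t, ht, hbt⟩, hab, hv⟩
    obtain ⟨j, hj⟩ : ∃ j, b j < a j := by
      by_contra! h
      refine hab (funext fun j => ?_)
      exact (Finset.sum_eq_sum_iff_of_le fun i _ => h i).1 (ha1.trans hb1.symm) j
        (Finset.mem_univ j)
    have hjs : j ∈ s := by
      by_contra h
      have := has j h
      have := hb0 j
      linarith
    obtain ⟨k, hk, -⟩ := exists_mem_and_pos hb1 hbt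
    obtain ⟨α, hα⟩ := exists_faceParam_eq hjs ha1 has
    obtain ⟨β, hβ⟩ := exists_faceParam_eq hk hb1 hbt
    refine mem_iUnion.2 ⟨⟨((s, t), j, k), hs, ht, hjs, hk⟩, (α, β), ?_, ?_⟩
    · simpa only [C, mem_ofPred_eq, hα, hβ, abs_of_nonneg (hb0 j)] using hj
    · funext e
      simp only [c, hα, hβ]
      simp only [compCLM, Finset.sum_apply, sub_apply, smul_apply, Pi.sub_apply, Pi.smul_apply,
        smul_eq_mul, one_apply_eq_self, ContinuousLinearMap.coe_pi',
        ContinuousLinearMap.proj_apply, Finset.sum_sub_distrib, Pi.zero_apply]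
      rw [hv e, sub_self]
  · obtain ⟨⟨⟨s, t⟩, j, k⟩, hs, ht, hj, hk⟩ := x
    refine dimH_setOf_exists_sum_eq_lt j _ (fun _ => 0) _ ?_ (fun i => ?_) contDiff_const
      (fun q hq => isUnit_smul_one_sub_smul_compCLM τ hq) ?_
    · intro p hp q hq x y hx hy hxy
      simp only [C, mem_ofPred_eq, Prod.fst_add, Prod.snd_add, Prod.smul_fst,
        Prod.smul_snd] at hp hq ⊢
      rw [faceParam_convexCombination _ _ _ _ _ hxy, faceParam_convexCombination _ _ _ _ _ hxy]
      refine (abs_add_le _ _).trans_lt ?_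
      rw [abs_mul, abs_mul, abs_of_nonneg hx, abs_of_nonneg hy]
      exact convexCombination_lt hx hy hxy hp hq
    · exact (((contDiff_faceParam s j i).comp contDiff_fst).smul contDiff_const).sub
        (((contDiff_faceParam t k i).comp contDiff_snd).smul contDiff_const)
    · have h1 := finrank_faceParam_domain_le hj hs
      have h2 := finrank_faceParam_domain_le hk ht
      rw [finrank_prod, finrank_fintype_fun_eq_card (R := ℝ) (η := E)]
      simp only at h1 h2 ⊢
      omega

/-- For most `v`, the linear map of simplices with vertices `v` has, on the `D`-skeleton, no value
which factors through `r`. -/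
theorem dimH_setOf_exists_eq_comp_lt {J E R : Type*} [Fintype J] [Fintype E] [Fintype R] {D : ℕ}
    (hJ : Nonempty J) (hD : 2 * D < Fintype.card E) (r : E → R)
    (hR : 2 * Fintype.card R ≤ Fintype.card E) :
    dimH {v : J → E → ℝ | ∃ a ∈ simplexSkeleton J D, ∃ u : R → ℝ,
      ∀ e, ∑ j, a j * v j e = u (r e)} < finrank ℝ (J → E → ℝ) := by
  classical
  have hpos := finrank_vertices_pos hJ (E := E) (by omega)
  let ι := {x : Finset J × J // x.1.card ≤ D + 1 ∧ x.2 ∈ x.1}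
  let c (x : ι) (i : J) (q : ({i // i ∈ x.1.1.erase x.1.2} → ℝ) × (R → ℝ)) :
      (E → ℝ) →L[ℝ] (E → ℝ) := faceParam x.1.1 x.1.2 q.1 i • 1
  let C (x : ι) : Set (({i // i ∈ x.1.1.erase x.1.2} → ℝ) × (R → ℝ)) :=
    {q | 0 < faceParam x.1.1 x.1.2 q.1 x.1.2}
  refine (dimH_mono ?_).trans_lt (dimH_iUnion_lt_of_finite (ι := ι)
    (s := fun x => {v | ∃ q ∈ C x, ∑ j, c x j q (v j) = fun e => q.2 (r e)}) hpos fun x => ?_)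
  · rintro v ⟨a, ⟨ha0, ha1, s, hs, has⟩, u, hv⟩
    obtain ⟨j, hj, hj0⟩ := exists_mem_and_pos ha1 has
    obtain ⟨α, hα⟩ := exists_faceParam_eq hj ha1 has
    refine mem_iUnion.2 ⟨⟨(s, j), hs, hj⟩, (α, u), ?_, ?_⟩
    · simpa only [C, mem_ofPred_eq, hα] using hj0
    · funext e
      simp only [c, hα]
      simpa using hv e
  · obtain ⟨⟨s, j⟩, hs, hj⟩ := x
    refine dimH_setOf_exists_sum_eq_lt j _ (fun q : _ × (R → ℝ) => fun e => q.2 (r e)) _ ?_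
      (fun i => ?_) ?_ (fun q hq => ?_) ?_
    · intro p hp q hq x y hx hy hxy
      simp only [C, mem_ofPred_eq, Prod.fst_add, Prod.smul_fst] at hp hq ⊢
      rw [faceParam_convexCombination _ _ _ _ _ hxy]
      simpa using convexCombination_lt hx hy hxy hp hq
    · exact ((contDiff_faceParam s j i).comp contDiff_fst).smul contDiff_const
    · fun_prop
    · have : faceParam s j q.1 j ≠ 0 := ne_of_gt hq
      exact isUnit_one.smul (Units.mk0 _ this)
    · have h1 := finrank_faceParam_domain_le hj hs
      rw [finrank_prod, finrank_fintype_fun_eq_card (R := ℝ) (η := E),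
        finrank_fintype_fun_eq_card (R := ℝ) (η := R)]
      simp only at h1 ⊢
      omega

theorem CovDimLE.of_isClosedEmbedding {X Y : Type*} [TopologicalSpace X] [TopologicalSpace Y]
    {f : Y → X} (hf : IsClosedEmbedding f) {m : ℕ} (h : CovDimLE X m) : CovDimLE Y m := by
  intro n U hU hcov
  rcases isEmpty_or_nonempty Y with hY | ⟨⟨y₀⟩⟩
  · exact ⟨0, Fin.elim0, fun j => j.elim0, Subsingleton.elim _ _, fun j => j.elim0,
      fun x => isEmptyElim x⟩
  choose O hO hOU using fun i => hf.isInducing.isOpen_iff.1 (hU i)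
  obtain ⟨k, V, hV, hVcov, hVO, hcard⟩ := h (n + 1) (Fin.cons (range f)ᶜ O)
    (fun i => Fin.cases hf.isClosed_range.isOpen_compl hO i) (by
      refine eq_univ_of_forall fun x => mem_iUnion.2 ?_
      by_cases hx : x ∈ range f
      · obtain ⟨y, rfl⟩ := hx
        obtain ⟨i, hi⟩ := mem_iUnion.1 (hcov ▸ mem_univ y : y ∈ ⋃ i, U i)
        exact ⟨i.succ, by simpa [← hOU] using hi⟩
      · exact ⟨0, hx⟩)
  obtain ⟨i₀, -⟩ := mem_iUnion.1 (hcov ▸ mem_univ y₀ : y₀ ∈ ⋃ i, U i)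
  refine ⟨k, fun j => f ⁻¹' V j, fun j => (hV j).preimage hf.continuous, ?_, fun j => ?_,
    fun x => hcard (f x)⟩
  · rw [← preimage_iUnion, hVcov, preimage_univ]
  · obtain ⟨i, hi⟩ := hVO j
    refine Fin.cases (fun hi => ⟨i₀, fun y hy => ?_⟩) (fun i hi => ⟨i, fun y hy => ?_⟩) i hi
    · exact absurd (mem_range_self y) (hi hy)
    · rw [← hOU]
      exact hi hy

/-- On a compact metric space of dimension at most `D` there are arbitrarily fine finite
partitions of unity, with at most `D + 1` functions nonzero at each point. -/
theorem CovDimLE.exists_fine_partition {M : Type*} [MetricSpace M] [CompactSpace M] {D : ℕ}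
    (hM : CovDimLE M D) {δ : ℝ} (hδ : 0 < δ) :
    ∃ (k : ℕ) (ψ : Fin k → C(M, ℝ)), (∀ m, (fun j => ψ j m) ∈ simplexSkeleton (Fin k) D) ∧
      ∀ j m m', ψ j m ≠ 0 → ψ j m' ≠ 0 → dist m m' < δ := by
  classical
  obtain ⟨s, -, hs, hcov⟩ := finite_cover_balls_of_compact (isCompact_univ (X := M)) (half_pos hδ)
  obtain ⟨n, e, he⟩ : ∃ (n : ℕ) (e : Fin n → M), range e = s := by
    have := hs.to_subtype
    obtain ⟨n, ⟨e⟩⟩ := Finite.exists_equiv_fin s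
    exact ⟨n, fun i => e.symm i, by
      rw [show (fun i => ((e.symm i : s) : M)) = Subtype.val ∘ e.symm from rfl,
        e.symm.surjective.range_comp, Subtype.range_coe]⟩
  obtain ⟨k, V, hV, hVcov, hVU, hcard⟩ := hM n (fun i => Metric.ball (e i) (δ / 2))
    (fun i => Metric.isOpen_ball) (by
      refine univ_subset_iff.1 (hcov.trans ?_)
      rw [← he, biUnion_range])
  obtain ⟨ρ, hρ⟩ := PartitionOfUnity.exists_isSubordinate isClosed_univ V hV hVcov.ge
  have hmem : ∀ j m, ρ j m ≠ 0 → m ∈ V j := fun j m hm => hρ j (subset_tsupport _ hm)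
  refine ⟨k, fun j => ρ j, fun m => ⟨fun j => ρ.nonneg j m, ?_,
    Finset.univ.filter fun j => m ∈ V j, ?_, fun j hj => ?_⟩, fun j m m' hm hm' => ?_⟩
  · rw [← finsum_eq_sum_of_fintype]
    exact ρ.sum_eq_one (mem_univ m)
  · rw [← Fintype.card_subtype, ← Nat.card_eq_fintype_card]
    exact hcard m
  · by_contra h
    exact hj (Finset.mem_filter.2 ⟨Finset.mem_univ j, hmem j m h⟩)
  · obtain ⟨i, hi⟩ := hVU j
    have h1 := Metric.mem_ball.1 (hi (hmem j m hm))
    have h2 := Metric.mem_ball.1 (hi (hmem j m' hm'))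
    have h3 := dist_triangle_right m m' (e i)
    linarith

/-- Prescribing a function on finitely many disjoint copies of `M` in `X`. -/
theorem exists_dist_lt_forall_eq {X M E : Type*} [TopologicalSpace X] [CompactSpace X] [T2Space X]
    [TopologicalSpace M] [CompactSpace M] [Finite E] {t : E → M → X}
    (htc : ∀ e, Continuous (t e)) (hti : Injective fun p : E × M => t p.1 p.2)
    (h : C(X, ℝ)) {g : E → M → ℝ} (hg : ∀ e, Continuous (g e)) {ε : ℝ} (hε : 0 < ε)
    (hgh : ∀ e m, |g e m - h (t e m)| ≤ ε) :
    ∃ h' : C(X, ℝ), dist h' h ≤ ε ∧ ∀ e m, h' (t e m) = g e m := by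
  let _ : TopologicalSpace E := ⊥
  have : DiscreteTopology E := ⟨rfl⟩
  have hcont : Continuous fun p : E × M => t p.1 p.2 := continuous_prod_of_discrete_left.2 htc
  have hemb : IsClosedEmbedding fun p : E × M => t p.1 p.2 := hcont.isClosedEmbedding hti
  have hgc : Continuous fun p : E × M => g p.1 p.2 - h (t p.1 p.2) :=
    (continuous_prod_of_discrete_left.2 hg).sub (h.continuous.comp hcont)
  let G : BoundedContinuousFunction (E × M) ℝ := BoundedContinuousFunction.mkOfCompact ⟨_, hgc⟩
  obtain ⟨g', hg', hg'G⟩ := G.exists_extension_norm_eq_of_isClosedEmbedding hemb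
  have hG : ‖G‖ ≤ ε := (BoundedContinuousFunction.norm_le hε.le).2 fun p => hgh p.1 p.2
  refine ⟨h + g'.toContinuousMap, (ContinuousMap.dist_le hε.le).2 fun x => ?_, fun e m => ?_⟩
  · have := g'.norm_coe_le_norm x
    rw [Real.dist_eq]
    simp only [ContinuousMap.add_apply, add_sub_cancel_left]
    exact this.trans (hg'.trans_le hG)
  · have := congrFun hg'G (e, m)
    change g' (t e m) = g e m - h (t e m) at this
    change h (t e m) + g' (t e m) = g e m
    rw [this]
    ring

/-- The main perturbation argument: given copies `t e` of a low-dimensional space `M` in `X`, a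
small change of `h` makes the values at `m` on the copies differ from the `τ`-permuted values at
`m'`, for all pairs `(m, m')` in `K`. -/
theorem exists_perturbation_forall_ne {X M E : Type*} [TopologicalSpace X] [CompactSpace X]
    [T2Space X] [MetricSpace M] [CompactSpace M] [Fintype E] {D : ℕ} (hM : CovDimLE M D)
    (hD : 2 * D < Fintype.card E) {t : E → M → X} (htc : ∀ e, Continuous (t e))
    (hti : Injective fun p : E × M => t p.1 p.2) (τ : E → E) {K : Set (M × M)} (hK : IsCompact K)
    (hKτ : (∀ p ∈ K, p.1 ≠ p.2) ∨ ∃ (R : Type) (_ : Fintype R) (r : E → R),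
      2 * Fintype.card R ≤ Fintype.card E ∧
        ∀ u : E → ℝ, (∀ e, u e = u (τ e)) → ∃ w : R → ℝ, ∀ e, u e = w (r e))
    (h : C(X, ℝ)) {ε : ℝ} (hε : 0 < ε) :
    ∃ h' : C(X, ℝ), dist h' h ≤ ε ∧ ∀ p ∈ K, ∃ e, h' (t e p.1) ≠ h' (t (τ e) p.2) := by
  rcases isEmpty_or_nonempty M with hMe | ⟨⟨m₀⟩⟩
  · exact ⟨h, by simpa using hε.le, fun p => isEmptyElim p.1⟩
  have hF : Continuous fun m e => h (t e m) := continuous_pi fun e => h.continuous.comp (htc e)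
  obtain ⟨δ₁, hδ₁, hFδ⟩ := Metric.uniformContinuous_iff.1
    (CompactSpace.uniformContinuous_of_continuous hF) (ε / 2) (half_pos hε)
  obtain ⟨δ₂, hδ₂, hKδ⟩ : ∃ δ > 0, (∀ p ∈ K, δ ≤ dist p.1 p.2) ∨ ∃ (R : Type) (_ : Fintype R)
      (r : E → R), 2 * Fintype.card R ≤ Fintype.card E ∧
        ∀ u : E → ℝ, (∀ e, u e = u (τ e)) → ∃ w : R → ℝ, ∀ e, u e = w (r e) := by
    rcases hKτ with hK' | hR
    · rcases K.eq_empty_or_nonempty with rfl | hne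
      · exact ⟨1, one_pos, Or.inl (by simp)⟩
      · obtain ⟨p, hp, hmin⟩ := hK.exists_isMinOn hne (continuous_dist.continuousOn)
        exact ⟨dist p.1 p.2, dist_pos.2 (hK' p hp), Or.inl fun q hq => hmin hq⟩
    · exact ⟨1, one_pos, Or.inr hR⟩
  obtain ⟨k, ψ, hψ, hψδ⟩ := hM.exists_fine_partition (lt_min hδ₁ hδ₂)
  have hJ : Nonempty (Fin k) := by
    obtain ⟨-, h1, -⟩ := hψ m₀
    by_contra hk
    rw [not_nonempty_iff] at hk
    simp at h1
  have hv₀ : ∀ j, ∃ v : E → ℝ, ∀ m, ψ j m ≠ 0 → dist (fun e => h (t e m)) v < ε / 2 := fun j => by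
    by_cases hj : ∃ m, ψ j m ≠ 0
    · obtain ⟨m', hm'⟩ := hj
      exact ⟨fun e => h (t e m'), fun m hm =>
        hFδ ((hψδ j m m' hm hm').trans_le (min_le_left _ _))⟩
    · push Not at hj
      exact ⟨0, fun m hm => absurd (hj m) hm⟩
  choose v₀ hv₀ using hv₀
  obtain ⟨v, hvv₀, hv₁, hv₂⟩ : ∃ v : Fin k → E → ℝ, dist v v₀ < ε / 2 ∧
      (∀ a ∈ simplexSkeleton (Fin k) D, ∀ b ∈ simplexSkeleton (Fin k) D, a ≠ b →
        ∃ e, ∑ j, a j * v j e ≠ ∑ j, b j * v j (τ e)) ∧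
      ((∀ p ∈ K, δ₂ ≤ dist p.1 p.2) ∨ ∀ a ∈ simplexSkeleton (Fin k) D,
        ∃ e, ∑ j, a j * v j e ≠ ∑ j, a j * v j (τ e)) := by
    have hB₁ := dimH_setOf_exists_ne_comp_eq_lt hJ hD τ
    rcases hKδ with hKδ | ⟨R, _, r, hR, hr⟩
    · obtain ⟨v, hv, hvd⟩ := (dense_compl_of_dimH_lt_finrank hB₁).exists_dist_lt v₀ (half_pos hε)
      refine ⟨v, by rwa [dist_comm], fun a ha b hb hab => ?_, Or.inl hKδ⟩
      by_contra! hc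
      exact hv ⟨a, ha, b, hb, hab, hc⟩
    · have hB := (dimH_union _ _).trans_lt
        (max_lt hB₁ (dimH_setOf_exists_eq_comp_lt hJ hD r hR))
      obtain ⟨v, hv, hvd⟩ := (dense_compl_of_dimH_lt_finrank hB).exists_dist_lt v₀ (half_pos hε)
      refine ⟨v, by rwa [dist_comm], fun a ha b hb hab => ?_, Or.inr fun a ha => ?_⟩
      · by_contra! hc
        exact hv (Or.inl ⟨a, ha, b, hb, hab, hc⟩)
      · by_contra! hc
        exact hv (Or.inr ⟨a, ha, hr _ hc⟩)
  obtain ⟨h', hh', hh'v⟩ := exists_dist_lt_forall_eq htc hti h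
    (g := fun e m => ∑ j, ψ j m * v j e) (fun e => by fun_prop) hε fun e m => by
      obtain ⟨hψ0, hψ1, -⟩ := hψ m
      have hsum : ∑ j, ψ j m * v j e - h (t e m) = ∑ j, ψ j m * (v j e - h (t e m)) := by
        simp only [mul_sub, Finset.sum_sub_distrib, ← Finset.sum_mul, hψ1, one_mul]
      rw [hsum]
      calc |∑ j, ψ j m * (v j e - h (t e m))|
          ≤ ∑ j, |ψ j m * (v j e - h (t e m))| := Finset.abs_sum_le_sum_abs _ _
        _ ≤ ∑ j, ψ j m * ε := Finset.sum_le_sum fun j _ => by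
            rw [abs_mul, abs_of_nonneg (hψ0 j)]
            by_cases hj : ψ j m = 0
            · simp [hj]
            · refine mul_le_mul_of_nonneg_left ?_ (hψ0 j)
              have h1 := (dist_le_pi_dist _ _ e).trans_lt (hv₀ j m hj)
              have h2 := (dist_le_pi_dist _ _ e).trans_lt
                ((dist_le_pi_dist v v₀ j).trans_lt hvv₀)
              have h3 := dist_triangle_right (v j e) (h (t e m)) (v₀ j e)
              rw [← Real.dist_eq]
              linarith
        _ = ε := by rw [← Finset.sum_mul, hψ1, one_mul]
  refine ⟨h', hh', fun p hp => ?_⟩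
  simp only [hh'v]
  by_cases hab : (fun j => ψ j p.1) = fun j => ψ j p.2
  · rcases hv₂ with hKδ | hv₂
    · obtain ⟨j, -, hj⟩ := exists_mem_and_pos (s := Finset.univ) (hψ p.1).2.1 (by simp)
      have h1 := hψδ j p.1 p.2 hj.ne' (by rw [← congrFun hab j]; exact hj.ne')
      exact absurd ((hKδ p hp).trans_lt (h1.trans_le (min_le_right _ _))) (lt_irrefl _)
    · obtain ⟨e, he⟩ := hv₂ _ (hψ p.1)
      refine ⟨e, ?_⟩
      simpa only [← congrFun hab] using he
  · exact hv₁ _ (hψ p.1) _ (hψ p.2) hab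

theorem exists_covDim_eq_and_covDimLE {X : Type*} [TopologicalSpace X] (h : covDim X ≠ ⊤) :
    ∃ m : ℕ, covDim X = m ∧ CovDimLE X m := by
  have hne : {e : ℕ∞ | ∃ m : ℕ, e = m ∧ CovDimLE X m}.Nonempty := by
    rw [nonempty_iff_ne_empty]
    intro he
    exact h (by rw [covDim, he, sInf_empty])
  exact csInf_mem hne

section Homeomorph

variable {X : Type*} [TopologicalSpace X] (T : X ≃ₜ X)

theorem Homeomorph.zpow_add_apply (i j : ℤ) (x : X) :
    (T ^ (i + j)) x = (T ^ i) ((T ^ j) x) := by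
  rw [zpow_add]
  rfl

theorem Homeomorph.zpow_apply_eq_self_iff (i : ℤ) (x : X) :
    (T ^ i) x = x ↔ (minimalPeriod T x : ℤ) ∣ i := by
  let _ : MulAction (X ≃ₜ X) X :=
    { smul := fun f x => f x
      one_smul := fun _ => rfl
      mul_smul := fun _ _ _ => rfl }
  exact MulAction.zpow_smul_eq_iff_minimalPeriod_dvd (a := T) (b := x)

theorem Homeomorph.zpow_apply_eq_zpow_apply_iff (i j : ℤ) (x y : X) :
    (T ^ i) x = (T ^ j) y ↔ (T ^ (i - j)) x = y := by
  rw [← (T ^ j).injective.eq_iff (b := y), ← Homeomorph.zpow_add_apply, add_sub_cancel]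

theorem Homeomorph.minimalPeriod_zpow_apply (i : ℤ) (x : X) :
    minimalPeriod T ((T ^ i) x) = minimalPeriod T x := by
  have key (n : ℤ) : (minimalPeriod T ((T ^ i) x) : ℤ) ∣ n ↔ (minimalPeriod T x : ℤ) ∣ n := by
    rw [← T.zpow_apply_eq_self_iff, ← T.zpow_apply_eq_self_iff, ← T.zpow_add_apply, add_comm,
      T.zpow_add_apply, (T ^ i).injective.eq_iff]
  refine Nat.dvd_antisymm ?_ ?_
  · exact Int.natCast_dvd_natCast.1 ((key _).2 dvd_rfl)
  · exact Int.natCast_dvd_natCast.1 ((key _).1 dvd_rfl)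

/-- The observables whose observations along orbits separate all pairs in `K`. -/
def orbitSeparating (K : Set (X × X)) : Set C(X, ℝ) :=
  {h | ∀ p ∈ K, ∃ i : ℤ, h ((T ^ i) p.1) ≠ h ((T ^ i) p.2)}

theorem isOpen_orbitSeparating [CompactSpace X] {K : Set (X × X)} (hK : IsCompact K) :
    IsOpen (orbitSeparating T K) := by
  rw [isOpen_iff_mem_nhds]
  intro h hh
  refine hK.eventually_forall_of_forall_eventually fun p hp => ?_
  obtain ⟨i, hi⟩ := hh p hp
  have h1 : Continuous fun z : C(X, ℝ) × (X × X) => z.1 ((T ^ i) z.2.1) :=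
    continuous_fst.eval ((T ^ i).continuous.comp continuous_snd.fst)
  have h2 : Continuous fun z : C(X, ℝ) × (X × X) => z.1 ((T ^ i) z.2.2) :=
    continuous_fst.eval ((T ^ i).continuous.comp continuous_snd.snd)
  filter_upwards [(isOpen_ne_fun h1 h2).mem_nhds hi] with z hz
  exact ⟨i, hz⟩

theorem exists_compact_subset_interior_forall_ne [T2Space X] [LocallyCompactSpace X] {E : Type*}
    [Finite E] (n : E → ℤ) {P : Set X} (hP : IsCompact P)
    (h : ∀ a ∈ P, ∀ b ∈ P, ∀ e e', e ≠ e' → (T ^ n e) a ≠ (T ^ n e') b) :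
    ∃ M, IsCompact M ∧ P ⊆ interior M ∧
      ∀ a ∈ M, ∀ b ∈ M, ∀ e e', e ≠ e' → (T ^ n e) a ≠ (T ^ n e') b := by
  have hopen : IsOpen {z : X × X | ∀ e e', e ≠ e' → (T ^ n e) z.1 ≠ (T ^ n e') z.2} := by
    simp only [ofPred_forall]
    refine isOpen_iInter_of_finite fun e => isOpen_iInter_of_finite fun e' =>
      isOpen_iInter_of_finite fun _ => isOpen_ne_fun ?_ ?_
    · exact (T ^ n e).continuous.comp continuous_fst
    · exact (T ^ n e').continuous.comp continuous_snd
  obtain ⟨u, v, hu, hv, hPu, hPv, huv⟩ := generalized_tube_lemma hP hP hopen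
    (fun z hz => h z.1 hz.1 z.2 hz.2)
  obtain ⟨M, hM, hPM, hMuv⟩ := exists_compact_between hP (hu.inter hv) (subset_inter hPu hPv)
  exact ⟨M, hM, hPM, fun a ha b hb =>
    huv (show (a, b) ∈ u ×ˢ v from ⟨(hMuv ha).1, (hMuv hb).2⟩)⟩

end Homeomorph

section Local

variable {X : Type*} [MetricSpace X] [CompactSpace X] (T : X ≃ₜ X)

/-- The local separation statement for pairs in distinct orbits or with aperiodic orbits. -/
theorem exists_compact_dense_orbitSeparating_of_ne {E : Type*} [Fintype E] {D : ℕ}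
    (hD : 2 * D < Fintype.card E) (n : E → ℤ) {F : Set X} (hF : IsClosed F)
    (hFD : ∀ M ⊆ F, IsClosed M → CovDimLE M D) {x y : X} (hxy : x ≠ y)
    (h : ∀ a ∈ ({x, y} : Set X), ∀ b ∈ ({x, y} : Set X), ∀ e e', e ≠ e' →
      (T ^ n e) a ≠ (T ^ n e') b) :
    ∃ K ∈ 𝓝[F ×ˢ F] (x, y), IsCompact K ∧ Dense (orbitSeparating T K) := by
  obtain ⟨M, hM, hPM, hinj⟩ := exists_compact_subset_interior_forall_ne T n
    ((finite_singleton y).insert x).isCompact h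
  have hMF : IsCompact (M ∩ F) := hM.inter_right hF
  have hKc : IsClosed {p : X × X | dist x y / 2 ≤ dist p.1 p.2} :=
    isClosed_le continuous_const continuous_dist
  refine ⟨((M ∩ F) ×ˢ (M ∩ F)) ∩ {p | dist x y / 2 ≤ dist p.1 p.2}, ?_,
    (hMF.prod hMF).inter_right hKc, ?_⟩
  · have h1 : M ×ˢ M ∈ 𝓝 (x, y) := prod_mem_nhds
      (mem_interior_iff_mem_nhds.1 (hPM (by simp))) (mem_interior_iff_mem_nhds.1 (hPM (by simp)))
    have h2 : {p : X × X | dist x y / 2 < dist p.1 p.2} ∈ 𝓝 (x, y) :=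
      (isOpen_lt continuous_const continuous_dist).mem_nhds (half_lt_self (dist_pos.2 hxy))
    filter_upwards [mem_nhdsWithin_of_mem_nhds h1, mem_nhdsWithin_of_mem_nhds h2,
      self_mem_nhdsWithin] with p hp1 hp2 hp3
    exact ⟨⟨⟨hp1.1, hp3.1⟩, ⟨hp1.2, hp3.2⟩⟩, le_of_lt hp2⟩
  · have : CompactSpace ↥(M ∩ F) := isCompact_iff_compactSpace.1 hMF
    rw [Metric.dense_iff]
    intro g ε hε
    obtain ⟨h', hh', hsep⟩ := exists_perturbation_forall_ne (hFD _ inter_subset_right hMF.isClosed)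
      hD (t := fun e (m : ↥(M ∩ F)) => (T ^ n e) m)
      (fun e => (T ^ n e).continuous.comp continuous_subtype_val)
      (by
        rintro ⟨e, a⟩ ⟨e', b⟩ hab
        obtain rfl : e = e' := by
          by_contra hne
          exact hinj a a.2.1 b b.2.1 e e' hne hab
        exact Prod.ext rfl (Subtype.ext ((T ^ n e).injective hab)))
      id (K := {p | dist x y / 2 ≤ dist p.1 p.2})
      (isClosed_le continuous_const continuous_dist).isCompact
      (Or.inl fun p hp hpe => by
        have : dist x y / 2 ≤ dist p.1 p.2 := hp
        rw [hpe, dist_self] at this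
        linarith [dist_pos.2 hxy])
      g (half_pos hε)
    refine ⟨h', Metric.mem_ball.2 (hh'.trans_lt (half_lt_self hε)), ?_⟩
    rintro ⟨a, b⟩ ⟨⟨ha, hb⟩, hab⟩
    obtain ⟨e, he⟩ := hsep (⟨a, ha⟩, ⟨b, hb⟩) hab
    exact ⟨n e, he⟩

/-- Functions invariant under a nontrivial rotation depend on at most half of their values. -/
theorem ZMod.exists_factor_of_add_invariant {p : ℕ} [NeZero p] {l : ZMod p} (hl : l ≠ 0) :
    ∃ (R : Type) (_ : Fintype R) (r : ZMod p → R),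
      2 * Fintype.card R ≤ Fintype.card (ZMod p) ∧
        ∀ u : ZMod p → ℝ, (∀ e, u e = u (e + l)) → ∃ w : R → ℝ, ∀ e, u e = w (r e) := by
  let H := AddSubgroup.zmultiples l
  let _ : Fintype (ZMod p ⧸ H) := Fintype.ofFinite _
  refine ⟨ZMod p ⧸ H, inferInstance, QuotientAddGroup.mk, ?_, fun u hu => ?_⟩
  · have hcard := AddSubgroup.card_eq_card_quotient_mul_card_addSubgroup H
    have hH : 2 ≤ Nat.card H := by
      have : Nontrivial H := ⟨⟨0, ⟨l, AddSubgroup.mem_zmultiples l⟩, fun h0 =>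
        hl (congrArg Subtype.val h0).symm⟩⟩
      exact Finite.one_lt_card
    rw [← Nat.card_eq_fintype_card, ← Nat.card_eq_fintype_card, hcard, mul_comm]
    exact Nat.mul_le_mul_left _ hH
  · have hzu (k : ℤ) (e : ZMod p) : u (e + k • l) = u e := by
      induction k using Int.induction_on with
      | zero => simp
      | succ k ih => rw [add_smul, one_smul, ← add_assoc, ← hu, ih]
      | pred k ih => rw [hu, sub_smul, one_smul, ← ih]; congr 1; abel
    refine ⟨Quotient.lift u fun a b hab => ?_, fun e => rfl⟩
    obtain ⟨k, hk⟩ := QuotientAddGroup.leftRel_apply.1 hab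
    rw [← hzu k a]
    congr 1
    rw [show k • l = -a + b from hk]
    abel

/-- The local separation statement for pairs on the same periodic orbit. -/
theorem exists_compact_dense_orbitSeparating_of_periodic {p D : ℕ} (hp : 0 < p) (hD : 2 * D < p)
    (hFD : ∀ M ⊆ {z | (T ^ (p : ℤ)) z = z}, IsClosed M → CovDimLE M D) {x : X}
    (hx : minimalPeriod T x = p) {l : ℤ} (hl : ¬ (p : ℤ) ∣ l) :
    ∃ K ∈ 𝓝[{z | (T ^ (p : ℤ)) z = z} ×ˢ {z | (T ^ (p : ℤ)) z = z}] (x, (T ^ l) x),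
      IsCompact K ∧ Dense (orbitSeparating T K) := by
  have : NeZero p := ⟨hp.ne'⟩
  set F : Set X := {z | (T ^ (p : ℤ)) z = z} with hFdef
  have hF : IsClosed F := isClosed_eq (T ^ (p : ℤ)).continuous continuous_id
  have hFinv (i : ℤ) {z : X} (hz : z ∈ F) : (T ^ i) z ∈ F := by
    change (T ^ (p : ℤ)) ((T ^ i) z) = (T ^ i) z
    rw [← T.zpow_add_apply, add_comm, T.zpow_add_apply, show (T ^ (p : ℤ)) z = z from hz]
  obtain ⟨M, hM, hPM, hinj⟩ := exists_compact_subset_interior_forall_ne T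
    (fun e : ZMod p => (e.val : ℤ)) (isCompact_singleton (x := x)) (by
      rintro a rfl b rfl e e' hee h
      rw [T.zpow_apply_eq_zpow_apply_iff, T.zpow_apply_eq_self_iff, hx] at h
      refine hee ?_
      have := (ZMod.intCast_zmod_eq_zero_iff_dvd _ p).2 h
      simpa [sub_eq_zero] using this)
  have hMF : IsCompact (M ∩ F) := hM.inter_right hF
  refine ⟨Prod.map id (T ^ l) '' ((M ∩ F) ×ˢ (M ∩ F)), ?_,
    (hMF.prod hMF).image (continuous_id.prodMap (T ^ l).continuous), ?_⟩
  · have hxM := mem_interior_iff_mem_nhds.1 (hPM rfl)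
    have hback (z : X) : (T ^ l) ((T ^ (-l)) z) = z := by
      rw [← T.zpow_add_apply, add_neg_cancel, zpow_zero]
      rfl
    have hback' (z : X) : (T ^ (-l)) ((T ^ l) z) = z := by
      rw [← T.zpow_add_apply, neg_add_cancel, zpow_zero]
      rfl
    have h1 : M ×ˢ ((T ^ (-l)) ⁻¹' M) ∈ 𝓝 (x, (T ^ l) x) := prod_mem_nhds hxM
      ((T ^ (-l)).continuous.continuousAt.preimage_mem_nhds (by rwa [hback']))
    filter_upwards [mem_nhdsWithin_of_mem_nhds h1, self_mem_nhdsWithin] with q hq1 hq2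
    exact ⟨(q.1, (T ^ (-l)) q.2), ⟨⟨hq1.1, hq2.1⟩, ⟨hq1.2, hFinv _ hq2.2⟩⟩,
      Prod.ext rfl (hback q.2)⟩
  · have : CompactSpace ↥(M ∩ F) := isCompact_iff_compactSpace.1 hMF
    rw [Metric.dense_iff]
    intro g ε hε
    obtain ⟨h', hh', hsep⟩ := exists_perturbation_forall_ne (hFD _ inter_subset_right hMF.isClosed)
      (by rwa [ZMod.card]) (t := fun (e : ZMod p) (m : ↥(M ∩ F)) => (T ^ (e.val : ℤ)) m)
      (fun e => (T ^ (e.val : ℤ)).continuous.comp continuous_subtype_val)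
      (by
        rintro ⟨e, a⟩ ⟨e', b⟩ hab
        obtain rfl : e = e' := by
          by_contra hne
          exact hinj a a.2.1 b b.2.1 e e' hne hab
        exact Prod.ext rfl (Subtype.ext ((T ^ (e.val : ℤ)).injective hab)))
      (fun e => e + (l : ZMod p)) isCompact_univ
      (Or.inr (ZMod.exists_factor_of_add_invariant
        fun h0 => hl ((ZMod.intCast_zmod_eq_zero_iff_dvd l p).1 h0)))
      g (half_pos hε)
    refine ⟨h', Metric.mem_ball.2 (hh'.trans_lt (half_lt_self hε)), ?_⟩
    rintro _ ⟨⟨a, b⟩, ⟨ha, hb⟩, rfl⟩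
    obtain ⟨e, he⟩ := hsep (⟨a, ha⟩, ⟨b, hb⟩) (mem_univ _)
    refine ⟨e.val, ?_⟩
    have hshift : (T ^ ((e + (l : ZMod p)).val : ℤ)) b = (T ^ (e.val : ℤ)) ((T ^ l) b) := by
      rw [← T.zpow_add_apply, T.zpow_apply_eq_zpow_apply_iff, T.zpow_apply_eq_self_iff]
      refine ((T.zpow_apply_eq_self_iff p b).1 hb.2).trans ?_
      rw [← ZMod.intCast_zmod_eq_zero_iff_dvd]
      simp
    simp only [hshift] at he
    exact he

/-- Pairs of distinct points of the same minimal period can locally be separated by generic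
observables. -/
theorem exists_compact_dense_orbitSeparating {d : ℕ} (hd : CovDimLE X d)
    (hper : ∀ p : ℕ, 0 < p → ∃ D, 2 * D < p ∧
      ∀ M ⊆ {z | (T ^ (p : ℤ)) z = z}, IsClosed M → CovDimLE M D)
    (p : ℕ) {x y : X} (hxy : x ≠ y) (hx : minimalPeriod T x = p) (hy : minimalPeriod T y = p) :
    ∃ K ∈ 𝓝[{z | minimalPeriod T z = p} ×ˢ {z | minimalPeriod T z = p}] (x, y),
      IsCompact K ∧ Dense (orbitSeparating T K) := by
  have hsub : {z | minimalPeriod T z = p} ⊆ {z | (T ^ (p : ℤ)) z = z} := fun z hz =>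
    (T.zpow_apply_eq_self_iff p z).2 (by rw [show minimalPeriod T z = p from hz])
  rcases Nat.eq_zero_or_pos p with rfl | hp
  · obtain ⟨N, hN, hNxy⟩ : ∃ N : ℤ, N ≠ 0 ∧ ∀ k : ℤ, (T ^ (N * k)) x ≠ y := by
      by_cases hl : ∃ l : ℤ, (T ^ l) x = y
      · obtain ⟨l, rfl⟩ := hl
        have hl0 : l ≠ 0 := by
          rintro rfl
          exact hxy rfl
        refine ⟨2 * l, by simpa using hl0, fun k hk => ?_⟩
        rw [T.zpow_apply_eq_zpow_apply_iff, T.zpow_apply_eq_self_iff, hx, Nat.cast_zero,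
          zero_dvd_iff, show 2 * l * k - l = l * (2 * k - 1) by ring] at hk
        rcases mul_eq_zero.1 hk with h | h
        · exact hl0 h
        · omega
      · push Not at hl
        exact ⟨1, one_ne_zero, fun k => hl _⟩
    obtain ⟨K, hK, hKc, hKd⟩ := exists_compact_dense_orbitSeparating_of_ne T
      (E := Fin (2 * d + 1)) (D := d) (by simp) (fun e => N * (e : ℤ)) isClosed_univ
      (fun M _ hM => hd.of_isClosedEmbedding hM.isClosedEmbedding_subtypeVal) hxy (by
        have hap (z : X) (hz : minimalPeriod T z = 0) (e e' : Fin (2 * d + 1)) (hee : e ≠ e') :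
            (T ^ (N * (e : ℤ))) z ≠ (T ^ (N * (e' : ℤ))) z := fun h => by
          rw [T.zpow_apply_eq_zpow_apply_iff, T.zpow_apply_eq_self_iff, hz, Nat.cast_zero,
            zero_dvd_iff, ← mul_sub, mul_eq_zero, or_iff_right hN] at h
          exact hee (Fin.ext (by omega))
        have hne (e e' : Fin (2 * d + 1)) : (T ^ (N * (e : ℤ))) x ≠ (T ^ (N * (e' : ℤ))) y :=
          fun h => by
            rw [T.zpow_apply_eq_zpow_apply_iff, ← mul_sub] at h
            exact hNxy _ h
        rintro a (rfl | rfl) b (rfl | rfl) e e' hee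
        exacts [hap _ hx e e' hee, hne e e', (hne e' e).symm, hap _ hy e e' hee])
    exact ⟨K, nhdsWithin_mono _ (prod_mono (subset_univ _) (subset_univ _)) hK, hKc, hKd⟩
  · obtain ⟨D, hD, hFD⟩ := hper p hp
    by_cases hl : ∃ l : ℤ, (T ^ l) x = y
    · obtain ⟨l, rfl⟩ := hl
      obtain ⟨K, hK, hKc, hKd⟩ := exists_compact_dense_orbitSeparating_of_periodic T hp hD hFD hx
        (l := l) fun h => hxy ((T.zpow_apply_eq_self_iff l x).2 (hx ▸ h)).symm
      exact ⟨K, nhdsWithin_mono _ (prod_mono hsub hsub) hK, hKc, hKd⟩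
    · push Not at hl
      obtain ⟨K, hK, hKc, hKd⟩ := exists_compact_dense_orbitSeparating_of_ne T
        (E := Fin p) (D := D) (by simpa using hD) (fun e => (e : ℤ))
        (isClosed_eq (T ^ (p : ℤ)).continuous continuous_id) hFD hxy (by
          have hap (z : X) (hz : minimalPeriod T z = p) (e e' : Fin p) (hee : e ≠ e') :
              (T ^ (e : ℤ)) z ≠ (T ^ (e' : ℤ)) z := fun h => by
            rw [T.zpow_apply_eq_zpow_apply_iff, T.zpow_apply_eq_self_iff, hz] at h
            have h0 := Int.eq_zero_of_abs_lt_dvd h (by rw [abs_lt]; omega)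
            exact hee (Fin.ext (by omega))
          have hne (e e' : Fin p) : (T ^ (e : ℤ)) x ≠ (T ^ (e' : ℤ)) y := fun h => by
            rw [T.zpow_apply_eq_zpow_apply_iff] at h
            exact hl _ h
          rintro a (rfl | rfl) b (rfl | rfl) e e' hee
          exacts [hap _ hx e e' hee, hne e e', (hne e' e).symm, hap _ hy e e' hee])
      exact ⟨K, nhdsWithin_mono _ (prod_mono hsub hsub) hK, hKc, hKd⟩

/-- Some (in fact a generic) observable separates all points along their orbits. -/
theorem exists_forall_ne_orbit_ne {d : ℕ} (hd : CovDimLE X d)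
    (hper : ∀ p : ℕ, 0 < p → ∃ D, 2 * D < p ∧
      ∀ M ⊆ {z | (T ^ (p : ℤ)) z = z}, IsClosed M → CovDimLE M D) :
    ∃ h : C(X, ℝ), ∀ x y, x ≠ y → ∃ i : ℤ, h ((T ^ i) x) ≠ h ((T ^ i) y) := by
  let S (p : ℕ) : Set (X × X) :=
    {z | z.1 ≠ z.2 ∧ minimalPeriod T z.1 = p ∧ minimalPeriod T z.2 = p}
  have hloc (p : ℕ) (z : X × X) : ∃ K : Set (X × X), IsCompact K ∧ Dense (orbitSeparating T K) ∧
      (z ∈ S p → K ∈ 𝓝[S p] z) := by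
    by_cases hz : z ∈ S p
    · obtain ⟨K, hK, hKc, hKd⟩ :=
        exists_compact_dense_orbitSeparating T hd hper p hz.1 hz.2.1 hz.2.2
      exact ⟨K, hKc, hKd, fun _ =>
        nhdsWithin_mono _ (fun w (hw : w ∈ S p) => mk_mem_prod hw.2.1 hw.2.2) hK⟩
    · refine ⟨∅, isCompact_empty, ?_, fun h => absurd h hz⟩
      rw [show orbitSeparating T (∅ : Set (X × X)) = univ from
        eq_univ_of_forall fun h p hp => absurd hp (notMem_empty p)]
      exact dense_univ
  choose K hKc hKd hKS using hloc
  choose c hcS hcc hcov using fun p =>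
    TopologicalSpace.countable_cover_nhdsWithin (f := K p) (s := S p) (hKS p)
  have hdense : Dense (⋂ p, ⋂ z ∈ c p, orbitSeparating T (K p z)) := by
    have hG (p : ℕ) : IsGδ (⋂ z ∈ c p, orbitSeparating T (K p z)) :=
      IsGδ.biInter (hcc p) fun z _ => (isOpen_orbitSeparating T (hKc p z)).isGδ
    exact dense_iInter_of_Gδ hG fun p => dense_biInter_of_isOpen
      (fun z _ => isOpen_orbitSeparating T (hKc p z)) (hcc p) fun z _ => hKd p z
  obtain ⟨h, hh⟩ := hdense.nonempty
  have hsame (x y : X) (hxy : x ≠ y) (hp : minimalPeriod T x = minimalPeriod T y) :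
      ∃ i : ℤ, h ((T ^ i) x) ≠ h ((T ^ i) y) := by
    obtain ⟨z, hz, hxyz⟩ := mem_iUnion₂.1
      (hcov (minimalPeriod T y) (show (x, y) ∈ S (minimalPeriod T y) from ⟨hxy, hp, rfl⟩))
    exact mem_iInter₂.1 (mem_iInter.1 hh (minimalPeriod T y)) z hz (x, y) hxyz
  have hdvd (x y : X) (heq : ∀ i : ℤ, h ((T ^ i) x) = h ((T ^ i) y)) :
      minimalPeriod T y ∣ minimalPeriod T x := by
    by_contra hnd
    set p := minimalPeriod T x with hp
    have hy : y ≠ (T ^ (p : ℤ)) y := fun h => hnd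
      (Int.natCast_dvd_natCast.1 ((T.zpow_apply_eq_self_iff p y).1 h.symm))
    obtain ⟨i, hi⟩ := hsame _ _ hy (T.minimalPeriod_zpow_apply p y).symm
    refine hi ?_
    rw [← T.zpow_add_apply, ← heq, ← heq, T.zpow_add_apply,
      (T.zpow_apply_eq_self_iff p x).2 (by rw [hp])]
  refine ⟨h, fun x y hxy => ?_⟩
  by_contra! heq
  obtain ⟨i, hi⟩ := hsame x y hxy
    (Nat.dvd_antisymm (hdvd y x fun i => (heq i).symm) (hdvd x y heq))
  exact hi (heq i)

end Local

theorem stmt9 {X : Type*} [MetricSpace X] [CompactSpace X]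
    (T : X ≃ₜ X) (d : ℕ) (hdim : covDim X = d)
    (hper : ∀ n : ℕ, 1 ≤ n → n ≤ 2 * d →
      2 * covDim (periodicLE (⇑T) n) < (n : ℕ∞)) :
    ∃ φ : X → (ℤ → I), IsEmbedding φ ∧
      ∀ (x : X) (i : ℤ), φ (T x) i = φ x (i + 1) := by
  obtain ⟨d', hd', hX⟩ := exists_covDim_eq_and_covDimLE (X := X)
    (by rw [hdim]; exact ENat.natCast_ne_top d)
  obtain rfl : d = d' := by exact_mod_cast hdim.symm.trans hd'
  have hFix (p : ℕ) (hp : 0 < p) : {z | (T ^ (p : ℤ)) z = z} ⊆ periodicLE T p := fun z hz =>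
    ⟨p, hp, le_rfl, isPeriodicPt_iff_minimalPeriod_dvd.2
      (Int.natCast_dvd_natCast.1 ((T.zpow_apply_eq_self_iff p z).1 hz))⟩
  obtain ⟨h, hh⟩ := exists_forall_ne_orbit_ne T hX fun p hp => by
    rcases le_or_gt p (2 * d) with hpd | hpd
    · have hlt := hper p hp hpd
      obtain ⟨D, hD, hPD⟩ := exists_covDim_eq_and_covDimLE (X := periodicLE T p) (fun htop => by
        rw [htop, ENat.mul_top two_ne_zero] at hlt
        exact not_top_lt hlt)
      rw [hD] at hlt
      refine ⟨D, by exact_mod_cast hlt, fun M hMF hM => hPD.of_isClosedEmbedding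
        (IsClosedEmbedding.inclusion (hMF.trans (hFix p hp))
          (hM.preimage continuous_subtype_val))⟩
    · exact ⟨d, hpd, fun M _ hM =>
        hX.of_isClosedEmbedding hM.isClosedEmbedding_subtypeVal⟩
  refine ⟨fun x i => unitInterval.sigmoid (h ((T ^ i) x)), ?_, fun x i => ?_⟩
  · refine (Continuous.isClosedEmbedding (continuous_pi fun i => ?_) fun x y hxy => ?_).isEmbedding
    · exact unitInterval.continuous_sigmoid.comp (h.continuous.comp (T ^ i).continuous)
    · by_contra hne
      obtain ⟨i, hi⟩ := hh x y hne
      exact hi (unitInterval.sigmoid_injective (congrFun hxy i))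
  · simp only [T.zpow_add_apply, zpow_one]
end
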